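/- arXiv:2012.01880 — 12 statements merged into one kernel-verified Lean document; each statement's English description precedes it below -/
import Mathlib

section
/- For every integer n ≥ 1 and every function β from {0,1,…,n−1} to the nonempty subsets of {0,1}, there exist a non-decreasing function g : ℕ → ℝ taking only positive values and a constant c > 0 such that for every k ∈ {0,1,…,n−1}: 1 ∈ β(k) if and only if g(k+1) − g(k) ≥ c, and 0 ∈ β(k) if and only if g(k+1) − g(k) ≤ c. -/
/-- For every integer `n ≥ 1` and every function `β` from `{0,…,n-1}` to the
nonempty subsets of `{0,1}` (strategies encoded as `Bool`, `1 = true`, `0 = false`), there exist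
a non-decreasing function `g : ℕ → ℝ` taking only positive values and a constant `c > 0` such
that for every `k < n`: `1 ∈ β(k)` iff `g(k+1) - g(k) ≥ c`, and `0 ∈ β(k)` iff
`g(k+1) - g(k) ≤ c`. -/
theorem best_response_realizable (n : ℕ) (hn : 1 ≤ n)
    (β : Fin n → Set Bool) (hβ : ∀ k, (β k).Nonempty) :
    ∃ (g : ℕ → ℝ) (c : ℝ), Monotone g ∧ (∀ m : ℕ, 0 < g m) ∧ 0 < c ∧
      ∀ k : Fin n,
        (true ∈ β k ↔ c ≤ g ((k : ℕ) + 1) - g (k : ℕ)) ∧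
        (false ∈ β k ↔ g ((k : ℕ) + 1) - g (k : ℕ) ≤ c) := by
  classical
  obtain ⟨d, hd0, hd⟩ : ∃ d : ℕ → ℝ, (∀ m, 0 ≤ d m) ∧ ∀ k : Fin n,
      (true ∈ β k ↔ 1 ≤ d k) ∧ (false ∈ β k ↔ d k ≤ 1) := by
    refine ⟨fun m => if h : m < n then
      (if true ∈ β ⟨m, h⟩ then (if false ∈ β ⟨m, h⟩ then 1 else 2) else 0) else 0, ?_, ?_⟩
    · intro m
      dsimp only
      split_ifs <;> norm_num
    · intro k
      have hk : true ∈ β k ∨ false ∈ β k := by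
        obtain ⟨b, hb⟩ := hβ k
        cases b
        · exact Or.inr hb
        · exact Or.inl hb
      by_cases h1 : true ∈ β k <;> by_cases h2 : false ∈ β k
      · simp [h1, h2]
      · simp [h1, h2]
      · simp [h1, h2]
      · exact absurd hk (by simp [h1, h2])
  refine ⟨fun m => 1 + ∑ i ∈ Finset.range m, d i, 1, ?_, ?_, one_pos, ?_⟩
  · refine monotone_nat_of_le_succ fun m => ?_
    have := hd0 m
    simp only [Finset.sum_range_succ]
    linarith
  · intro m
    have : 0 ≤ ∑ i ∈ Finset.range m, d i := Finset.sum_nonneg fun i _ => hd0 i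
    dsimp only
    linarith
  · intro k
    have : (1 + ∑ i ∈ Finset.range ((k : ℕ) + 1), d i)
        - (1 + ∑ i ∈ Finset.range (k : ℕ), d i) = d k := by
      rw [Finset.sum_range_succ]
      ring
    dsimp only
    rw [this]
    exact hd k
end

section
/- The BNPG game on the graph G constructed from the formula φ has a pure strategy Nash equilibrium if and only if φ is satisfiable. -/
/-- The number of neighbors of `v` playing `1` (`true`) in the strategy profile `x`. -/
noncomputable def nOnes {V : Type*} (G : SimpleGraph V) (x : V → Bool) (v : V) : ℕ :=
  Nat.card {w : V // G.Adj v w ∧ x w = true}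

/-- `x` is a pure strategy Nash equilibrium (PSNE) of the BNPG game `(G, g, c)`:
for every player `v`, if `v` plays `1` then `g_v(n_v+1) - g_v(n_v) ≥ c_v`, and if `v` plays `0`
then `g_v(n_v+1) - g_v(n_v) ≤ c_v`. -/
def IsPSNE {V : Type*} (G : SimpleGraph V) (g : V → ℕ → ℝ) (c : V → ℝ) (x : V → Bool) : Prop :=
  ∀ v : V,
    (x v = true → c v ≤ g v (nOnes G x v + 1) - g v (nOnes G x v)) ∧
    (x v = false → g v (nOnes G x v + 1) - g v (nOnes G x v) ≤ c v)
/-- Vertices of the graph built from the formula: `Sum.inl (i, true)` is the literal vertex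
`a_i`, `Sum.inl (i, false)` is `ā_i`, and `Sum.inr j` is the clause vertex `y_j`. -/
abbrev SatV (n m : ℕ) := (Fin n × Bool) ⊕ Fin m

/-- Edges of the graph: `a_i — ā_i` for every variable `i`, and `y_j — f(l)` for every literal
`l` of the clause `C_j`, where `f(x_i) = a_i` and `f(¬x_i) = ā_i`.  (The graph itself is
`SimpleGraph.fromRel` of this relation.) -/
def satRel {n m : ℕ} (clauses : Fin m → Fin 3 → Fin n × Bool) :
    SatV n m → SatV n m → Prop
  | Sum.inl (i, b), Sum.inl (i', b') => i = i' ∧ b ≠ b'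
  | Sum.inr j, Sum.inl l => ∃ t : Fin 3, clauses j t = l
  | _, _ => False

/-- The graph `G` of the reduction. -/
def satGraph {n m : ℕ} (clauses : Fin m → Fin 3 → Fin n × Bool) : SimpleGraph (SatV n m) :=
  SimpleGraph.fromRel (satRel clauses)

/-- `g` for the literal vertices `a_i, ā_i`: values `1000, 1005, 1010, 1015, 1018` at
`0,1,2,3,4` and constant `1018` from `4` on. -/
noncomputable def gLit : ℕ → ℝ
  | 0 => 1000
  | 1 => 1005
  | 2 => 1010
  | 3 => 1015
  | _ => 1018

/-- `g` for the clause vertices `y_j`: values `1000, 1003, 1008, 1013, 1018` at `0,1,2,3,4`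
and constant `1018` from `4` on. -/
noncomputable def gClause : ℕ → ℝ
  | 0 => 1000
  | 1 => 1003
  | 2 => 1008
  | 3 => 1013
  | _ => 1018

/-- The utility functions of the players. -/
noncomputable def satg {n m : ℕ} : SatV n m → ℕ → ℝ
  | Sum.inl _ => gLit
  | Sum.inr _ => gClause


lemma adj_lit {n m : ℕ} (clauses : Fin m → Fin 3 → Fin n × Bool) (l : Fin n × Bool)
    (w : SatV n m) : (satGraph clauses).Adj (Sum.inl l) w ↔
      (w = Sum.inl (l.1, !l.2) ∨ ∃ j t, clauses j t = l ∧ w = Sum.inr j) := by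
  obtain ⟨i, b⟩ := l
  rcases w with ⟨i', b'⟩ | j
  · simp only [satGraph, SimpleGraph.fromRel_adj, satRel]
    cases b <;> cases b' <;> simp <;> grind
  · simp [satGraph, SimpleGraph.fromRel_adj, satRel]

lemma adj_clause {n m : ℕ} (clauses : Fin m → Fin 3 → Fin n × Bool) (j : Fin m)
    (w : SatV n m) : (satGraph clauses).Adj (Sum.inr j) w ↔
      ∃ t, w = Sum.inl (clauses j t) := by
  rcases w with ⟨i', b'⟩ | j'
  · simp [satGraph, SimpleGraph.fromRel_adj, satRel, eq_comm]
  · simp [satGraph, SimpleGraph.fromRel_adj, satRel]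

lemma card_lit {n m : ℕ} (clauses : Fin m → Fin 3 → Fin n × Bool)
    (hdistinct : ∀ j : Fin m, Function.Injective fun t : Fin 3 => (clauses j t).1)
    (hocc : ∀ (i : Fin n) (b : Bool),
      Nat.card {p : Fin m × Fin 3 // clauses p.1 p.2 = (i, b)} = 2) (l : Fin n × Bool) :
    Nat.card {w // (satGraph clauses).Adj (Sum.inl l) w} = 3 := by
  have h3 : Nat.card (Option {p : Fin m × Fin 3 // clauses p.1 p.2 = l}) = 3 := by
    rw [Finite.card_option, hocc l.1 l.2]
  rw [← h3]
  symm
  let F : Option {p : Fin m × Fin 3 // clauses p.1 p.2 = l} →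
      {w // (satGraph clauses).Adj (Sum.inl l) w} := fun o =>
    match o with
    | none => ⟨Sum.inl (l.1, !l.2), (adj_lit _ _ _).2 (Or.inl rfl)⟩
    | some p => ⟨Sum.inr p.1.1, (adj_lit _ _ _).2 (Or.inr ⟨p.1.1, p.1.2, p.2, rfl⟩)⟩
  refine Nat.card_eq_of_bijective F ⟨?_, ?_⟩
  · rintro (_ | ⟨⟨j, t⟩, hp⟩) (_ | ⟨⟨j', t'⟩, hq⟩) h
    · rfl
    · simp [F] at h
    · simp [F] at h
    · simp only [F, Subtype.mk.injEq, Sum.inr.injEq] at h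
      subst h
      have : t = t' := hdistinct j (by simp only at hp hq; simp [hp, hq])
      subst this
      rfl
  · rintro ⟨w, hw⟩
    rcases (adj_lit _ _ _).1 hw with h | ⟨j, t, h, h'⟩
    · exact ⟨none, Subtype.ext h.symm⟩
    · exact ⟨some ⟨(j, t), h⟩, Subtype.ext h'.symm⟩

lemma ones_le {V : Type*} [Finite V] (G : SimpleGraph V) (x : V → Bool) (v : V) :
    nOnes G x v ≤ Nat.card {w // G.Adj v w} :=
  Nat.card_mono (s := {w | G.Adj v w ∧ x w = true}) (t := {w | G.Adj v w})
    (Set.toFinite _) (fun _ h => h.1)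

lemma ones_eq_iff {V : Type*} [Finite V] (G : SimpleGraph V) (x : V → Bool) (v : V) :
    nOnes G x v = Nat.card {w // G.Adj v w} ↔ ∀ w, G.Adj v w → x w = true := by
  constructor
  · intro h w hw
    have := Set.eq_of_subset_of_ncard_le (s := {w | G.Adj v w ∧ x w = true})
      (t := {w | G.Adj v w}) (fun _ h => h.1) (le_of_eq h.symm) (Set.toFinite _)
    have h2 : w ∈ {w | G.Adj v w ∧ x w = true} := this ▸ hw
    exact h2.2
  · intro h
    unfold nOnes
    congr! 3 with w
    exact ⟨fun h => h.1, fun hw => ⟨hw, h w hw⟩⟩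

lemma ones_eq_zero {V : Type*} [Finite V] (G : SimpleGraph V) (x : V → Bool) (v : V) :
    nOnes G x v = 0 ↔ ∀ w, G.Adj v w → x w = false := by
  unfold nOnes
  rw [Finite.card_eq_zero_iff, isEmpty_subtype]
  simp

/-- Equilibrium condition, reformulated. -/
lemma psne_iff {n m : ℕ} (clauses : Fin m → Fin 3 → Fin n × Bool)
    (hdistinct : ∀ j : Fin m, Function.Injective fun t : Fin 3 => (clauses j t).1)
    (hocc : ∀ (i : Fin n) (b : Bool),
      Nat.card {p : Fin m × Fin 3 // clauses p.1 p.2 = (i, b)} = 2) (x : SatV n m → Bool) :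
    IsPSNE (satGraph clauses) satg (fun _ => 4) x ↔
      (∀ l, x (Sum.inl l) = false ↔ ∀ w, (satGraph clauses).Adj (Sum.inl l) w → x w = true) ∧
      (∀ j, x (Sum.inr j) = false ↔
        ∀ w, (satGraph clauses).Adj (Sum.inr j) w → x w = false) := by
  unfold IsPSNE
  rw [Sum.forall]
  refine and_congr (forall_congr' fun l => ?_) (forall_congr' fun j => ?_)
  · rw [← ones_eq_iff, card_lit clauses hdistinct hocc]
    have hle := ones_le (satGraph clauses) x (Sum.inl l)
    rw [card_lit clauses hdistinct hocc] at hle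
    generalize nOnes (satGraph clauses) x (Sum.inl l) = k at *
    interval_cases k <;> cases x (Sum.inl l) <;> simp [satg, gLit] <;> norm_num
  · rw [← ones_eq_zero]
    have hle := ones_le (satGraph clauses) x (Sum.inr j)
    have h3 : Nat.card {w // (satGraph clauses).Adj (Sum.inr j) w} ≤ 3 := by
      have := Nat.card_le_card_of_surjective
        (fun t : Fin 3 => (⟨Sum.inl (clauses j t), (adj_clause _ _ _).2 ⟨t, rfl⟩⟩ :
          {w // (satGraph clauses).Adj (Sum.inr j) w}))
        (by
          rintro ⟨w, hw⟩
          obtain ⟨t, ht⟩ := (adj_clause _ _ _).1 hw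
          exact ⟨t, Subtype.ext ht.symm⟩)
      simpa using this
    replace hle := hle.trans h3
    generalize nOnes (satGraph clauses) x (Sum.inr j) = k at *
    interval_cases k <;> cases x (Sum.inr j) <;> simp [satg, gClause] <;> norm_num

/-- Let `φ` be a CNF formula with `m` clauses, each consisting of exactly three
literals on three distinct variables (clause `j`'s `t`-th literal is the pair
`clauses j t = (variable, polarity)`), in which every variable occurs exactly twice positively
and exactly twice negatively.  The BNPG game on the graph constructed from `φ`, with `c_v = 4`
for every vertex, has a pure strategy Nash equilibrium iff `φ` is satisfiable. -/
theorem psne_iff_satisfiable (n m : ℕ)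
    (clauses : Fin m → Fin 3 → Fin n × Bool)
    (hdistinct : ∀ j : Fin m, Function.Injective fun t : Fin 3 => (clauses j t).1)
    (hocc : ∀ (i : Fin n) (b : Bool),
      Nat.card {p : Fin m × Fin 3 // clauses p.1 p.2 = (i, b)} = 2) :
    (∃ x : SatV n m → Bool, IsPSNE (satGraph clauses) satg (fun _ => 4) x) ↔
      ∃ h : Fin n → Bool, ∀ j : Fin m, ∃ t : Fin 3, h (clauses j t).1 = (clauses j t).2 := by
  simp only [psne_iff clauses hdistinct hocc]
  constructor
  · rintro ⟨x, hl, hc⟩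
    have key : ∀ l, x (Sum.inl l) = true → x (Sum.inl (l.1, !l.2)) = false := by
      intro l h
      by_contra h2
      have h2 : x (Sum.inl (l.1, !l.2)) = true := by simpa using h2
      have := (hl l).2 (by
        intro w hw
        rcases (adj_lit _ _ _).1 hw with rfl | ⟨j, t, ht, rfl⟩
        · exact h2
        · by_contra h4
          have h5 := (hc j).1 (by simpa using h4) _ ((adj_clause _ _ _).2 ⟨t, rfl⟩)
          rw [ht, h] at h5
          cases h5)
      rw [h] at this
      cases this
    refine ⟨fun i => x (Sum.inl (i, true)), fun j => ?_⟩
    have hj : ∃ t, x (Sum.inl (clauses j t)) = true := by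
      by_contra hno
      have hno : ∀ t, x (Sum.inl (clauses j t)) = false := by simpa using hno
      have h1 := (hc j).2 (by
        intro w hw
        obtain ⟨t, rfl⟩ := (adj_clause _ _ _).1 hw
        exact hno t)
      have h2 := (hl _).1 (hno 0) (Sum.inr j) ((adj_lit _ _ _).2 (Or.inr ⟨j, 0, rfl, rfl⟩))
      rw [h1] at h2
      cases h2
    obtain ⟨t, ht⟩ := hj
    refine ⟨t, ?_⟩
    have hk := key _ ht
    generalize clauses j t = l at *
    obtain ⟨i, b⟩ := l
    cases b <;> simpa using (by assumption)
  · rintro ⟨h, hh⟩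
    refine ⟨Sum.elim (fun l => h l.1 == l.2) (fun _ => true), ?_, ?_⟩
    · rintro ⟨i, b⟩
      simp only [adj_lit]
      constructor
      · rintro h1 w (rfl | ⟨j, t, ht, rfl⟩)
        · revert h1
          simp only [Sum.elim_inl]
          cases h i <;> cases b <;> simp
        · rfl
      · intro h1
        have := h1 _ (Or.inl rfl)
        revert this
        simp only [Sum.elim_inl]
        cases h i <;> cases b <;> simp
    · intro j
      simp only [adj_clause, Sum.elim_inr, Bool.true_eq_false, false_iff]
      intro hno
      obtain ⟨t, ht⟩ := hh j
      have := hno _ ⟨t, rfl⟩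
      simp [ht] at this
end

section
/- In every pure strategy Nash equilibrium x of the BNPG game constructed from the formula φ, we have x_{y_j} = 1 for every j ∈ [m], and x_{a_i} ≠ x_{ā_i} for every i ∈ [n]. -/
theorem nOnes_eq_ncard {V : Type*} (G : SimpleGraph V) (x : V → Bool) (v : V) :
    nOnes G x v = ({w | G.Adj v w ∧ x w = true} : Set V).ncard := rfl

theorem lit_nbrs_ncard {n m : ℕ} (clauses : Fin m → Fin 3 → Fin n × Bool)
    (hdistinct : ∀ j : Fin m, Function.Injective fun t : Fin 3 => (clauses j t).1)
    (hocc : ∀ (i : Fin n) (b : Bool),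
      Nat.card {p : Fin m × Fin 3 // clauses p.1 p.2 = (i, b)} = 2) (i : Fin n) (b : Bool) :
    ({w | (satGraph clauses).Adj (Sum.inl (i, b)) w} : Set (SatV n m)).ncard = 3 := by
  have hset : ({w | (satGraph clauses).Adj (Sum.inl (i, b)) w} : Set (SatV n m)) =
      insert (Sum.inl (i, !b))
        ((fun p : Fin m × Fin 3 => (Sum.inr p.1 : SatV n m)) ''
          {p | clauses p.1 p.2 = (i, b)}) := by
    ext w
    rcases w with ⟨i', b'⟩ | j
    · simp only [satGraph, SimpleGraph.fromRel_adj, satRel, Set.mem_setOf_eq, Set.mem_insert_iff,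
        Set.mem_image]
      cases b <;> cases b' <;> simp [eq_comm]
    · simp [satGraph, SimpleGraph.fromRel_adj, satRel]
  rw [hset, Set.ncard_insert_of_notMem (by simp) (Set.toFinite _), Set.ncard_image_of_injOn]
  · have := hocc i b
    rw [← Set.coe_setOf, Nat.card_coe_set_eq] at this
    rw [this]
  · rintro ⟨j, t⟩ h ⟨j', t'⟩ h' e
    simp only [Set.mem_setOf_eq] at h h'
    have e' : j = j' := by simpa using e
    subst e'
    have : t = t' := hdistinct j (by simp [h, h'])
    rw [this]

theorem clause_nbrs_ncard {n m : ℕ} (clauses : Fin m → Fin 3 → Fin n × Bool) (j : Fin m) :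
    ({w | (satGraph clauses).Adj (Sum.inr j) w} : Set (SatV n m)).ncard ≤ 3 := by
  have hset : ({w | (satGraph clauses).Adj (Sum.inr j) w} : Set (SatV n m)) =
      Set.range (fun t => (Sum.inl (clauses j t) : SatV n m)) := by
    ext w
    rcases w with l | j' <;> simp [satGraph, SimpleGraph.fromRel_adj, satRel]
  rw [hset, ← Set.image_univ]
  refine (Set.ncard_image_le (Set.toFinite _)).trans ?_
  simp [Set.ncard_univ]

theorem lit_false {n m k : ℕ} {l : Fin n × Bool}
    (h : satg (m := m) (Sum.inl l) (k + 1) - satg (m := m) (Sum.inl l) k ≤ 4) : 3 ≤ k := by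
  by_contra hk
  have : k = 0 ∨ k = 1 ∨ k = 2 := by omega
  rcases this with rfl | rfl | rfl <;> norm_num [satg, gLit] at h

theorem clause_false {n m k : ℕ} {j : Fin m} (hk : k ≤ 3)
    (h : satg (n := n) (Sum.inr j) (k + 1) - satg (n := n) (Sum.inr j) k ≤ 4) : k = 0 := by
  by_contra h0
  have : k = 1 ∨ k = 2 ∨ k = 3 := by omega
  rcases this with rfl | rfl | rfl <;> norm_num [satg, gClause] at h

/-- In every pure strategy Nash equilibrium `x` of the BNPG game constructed
from the formula `φ`, every clause vertex `y_j` plays `1`, and `x_{a_i} ≠ x_{ā_i}` for every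
variable `i`. -/
theorem psne_structure (n m : ℕ)
    (clauses : Fin m → Fin 3 → Fin n × Bool)
    (hdistinct : ∀ j : Fin m, Function.Injective fun t : Fin 3 => (clauses j t).1)
    (hocc : ∀ (i : Fin n) (b : Bool),
      Nat.card {p : Fin m × Fin 3 // clauses p.1 p.2 = (i, b)} = 2)
    (x : SatV n m → Bool) (hx : IsPSNE (satGraph clauses) satg (fun _ => 4) x) :
    (∀ j : Fin m, x (Sum.inr j) = true) ∧
      ∀ i : Fin n, x (Sum.inl (i, true)) ≠ x (Sum.inl (i, false)) := by
  have hlit : ∀ i b, x (Sum.inl (i, b)) = false →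
      ∀ w, (satGraph clauses).Adj (Sum.inl (i, b)) w → x w = true := by
    intro i b h0 w hw
    have h3 := lit_false ((hx (Sum.inl (i, b))).2 h0)
    rw [nOnes_eq_ncard, ← lit_nbrs_ncard clauses hdistinct hocc i b] at h3
    have := Set.eq_of_subset_of_ncard_le (fun w h => h.1) h3 (Set.toFinite _)
    have hw' : w ∈ {w | (satGraph clauses).Adj (Sum.inl (i, b)) w} := hw
    rw [← this] at hw'
    exact hw'.2
  have hy : ∀ j : Fin m, x (Sum.inr j) = true := by
    intro j
    by_contra hj
    have hj0 : x (Sum.inr j) = false := by simpa using hj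
    have hle : nOnes (satGraph clauses) x (Sum.inr j) ≤ 3 := by
      rw [nOnes_eq_ncard]
      exact (Set.ncard_le_ncard (fun w h => h.1) (Set.toFinite _)).trans
        (clause_nbrs_ncard clauses j)
    have h0 := clause_false hle ((hx (Sum.inr j)).2 hj0)
    rw [nOnes_eq_ncard, Set.ncard_eq_zero (Set.toFinite _)] at h0
    have hadj : (satGraph clauses).Adj (Sum.inr j) (Sum.inl (clauses j 0)) := by
      simp [satGraph, SimpleGraph.fromRel_adj, satRel]
    have hl : x (Sum.inl (clauses j 0)) = false := by
      by_contra hl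
      have : (Sum.inl (clauses j 0) : SatV n m) ∈
          {w | (satGraph clauses).Adj (Sum.inr j) w ∧ x w = true} := ⟨hadj, by simpa using hl⟩
      rw [h0] at this
      exact this
    exact hj (hlit _ _ hl _ hadj.symm)
  refine ⟨hy, fun i he => ?_⟩
  have hadj : (satGraph clauses).Adj (Sum.inl (i, true)) (Sum.inl (i, false)) := by
    simp [satGraph, SimpleGraph.fromRel_adj, satRel]
  cases ht : x (Sum.inl (i, true)) with
  | false =>
    have := hlit _ _ ht _ hadj
    rw [← he, ht] at this
    exact absurd this (by simp)
  | true =>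
    have h3 : nOnes (satGraph clauses) x (Sum.inl (i, true)) = 3 := by
      rw [nOnes_eq_ncard, ← lit_nbrs_ncard clauses hdistinct hocc i true]
      congr 1
      ext w
      simp only [Set.mem_setOf_eq, and_iff_left_iff_imp]
      intro hw
      rcases w with ⟨i', b'⟩ | j
      · simp only [satGraph, SimpleGraph.fromRel_adj, satRel] at hw
        have e : i' = i := by
          rcases hw.2 with h | h
          · exact h.1.symm
          · exact h.1
        subst e
        cases b'
        · rw [← he, ht]
        · exact ht
      · exact hy j
    have h := (hx (Sum.inl (i, true))).1 ht
    rw [h3] at h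
    norm_num [satg, gLit] at h
end

section
/- The heterogeneous BNPG game on G has a pure strategy Nash equilibrium if and only if the fully homogeneous BNPG game (g, c) on H has a pure strategy Nash equilibrium. -/
/-- Vertices of the graph `H`: `Sum.inl i` is `u_i` (for the player `v_i` of `G`), and
`Sum.inr ⟨i, a⟩` is one of the `2 + (i-1)·n` pendant vertices `a^i_1, …, a^i_{2+(i-1)n}`
attached to `u_i` (here `i` is `0`-indexed, so the count is `2 + i·n`). -/
abbrev HomV (n : ℕ) := Fin n ⊕ (Σ i : Fin n, Fin (2 + (i : ℕ) * n))

/-- Edges of `H`: `{u_i, u_j}` whenever `{v_i, v_j}` is an edge of `G`, and each pendant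
vertex `a^i_j` is adjacent exactly to `u_i`.  (`H` is `SimpleGraph.fromRel` of this.) -/
def homRel {n : ℕ} (G₀ : SimpleGraph (Fin n)) : HomV n → HomV n → Prop
  | Sum.inl i, Sum.inl j => G₀.Adj i j
  | Sum.inl i, Sum.inr p => p.1 = i
  | _, _ => False

/-- The graph `H` of the heterogeneous-to-fully-homogeneous reduction. -/
def homGraph {n : ℕ} (G₀ : SimpleGraph (Fin n)) : SimpleGraph (HomV n) :=
  SimpleGraph.fromRel (homRel G₀)

theorem nOnes_pendant_le {n : ℕ} (G₀ : SimpleGraph (Fin n)) (y : HomV n → Bool)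
    (p : Σ i : Fin n, Fin (2 + (i : ℕ) * n)) :
    nOnes (homGraph G₀) y (Sum.inr p) ≤ 1 := by
  unfold nOnes
  have : Subsingleton {w : HomV n // (homGraph G₀).Adj (Sum.inr p) w ∧ y w = true} := by
    have key : ∀ w : HomV n, (homGraph G₀).Adj (Sum.inr p) w → w = Sum.inl p.1 := by
      rintro (j | q) h
      · simp [homGraph, homRel] at h
        rw [h]
      · simp [homGraph, homRel] at h
    constructor
    rintro ⟨a, ha, _⟩ ⟨b, hb, _⟩
    exact Subtype.ext ((key a ha).trans (key b hb).symm)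
  exact Finite.card_le_one_iff_subsingleton.mpr this

theorem nOnes_lt {n : ℕ} (G₀ : SimpleGraph (Fin n)) (x : Fin n → Bool) (i : Fin n) :
    nOnes G₀ x i < n := by
  classical
  unfold nOnes
  rw [Nat.card_eq_fintype_card]
  have := Fintype.card_subtype_lt (p := fun w => G₀.Adj i w ∧ x w = true) (x := i) (by simp)
  simpa using this

theorem nOnes_main {n : ℕ} (G₀ : SimpleGraph (Fin n)) (y : HomV n → Bool)
    (hy : ∀ p, y (Sum.inr p) = true) (i : Fin n) :
    nOnes (homGraph G₀) y (Sum.inl i) = 2 + i * n + nOnes G₀ (fun j => y (Sum.inl j)) i := by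
  unfold nOnes
  rw [Nat.card_congr (Equiv.subtypeSum), Nat.card_sum, add_comm]
  congr 1
  · have e : Fin (2 + (i : ℕ) * n) ≃ {q : Σ i : Fin n, Fin (2 + (i : ℕ) * n) //
        (homGraph G₀).Adj (Sum.inl i) (Sum.inr q) ∧ y (Sum.inr q) = true} :=
      Equiv.ofBijective (fun a => ⟨⟨i, a⟩, by simp [homGraph, homRel, hy]⟩) (by
        constructor
        · intro a b h
          simpa using h
        · rintro ⟨⟨j, a⟩, h, _⟩
          have hj : j = i := by simpa [homGraph, homRel] using h
          subst hj
          exact ⟨a, rfl⟩)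
    rw [← Nat.card_congr e, Nat.card_fin]
  · apply Nat.card_congr
    apply Equiv.subtypeEquivRight
    intro j
    simp only [homGraph, homRel, SimpleGraph.fromRel_adj, ne_eq, Sum.inl.injEq]
    have h1 := G₀.adj_comm i j
    have h2 : G₀.Adj i j → ¬ i = j := fun h => h.ne
    tauto

/-- Let `(G₀, gG, cG)` be a heterogeneous BNPG game with `n ≥ 1` players, and
let `(g, c)` be any fully homogeneous BNPG game on the graph `H` built from `G₀` satisfying
`Δg(0) > c`, `Δg(1) > c`, and, for every `2 ≤ k ≤ n² + 1` (writing `f(k) - 1 = (k-2)/n` for the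
index `i` and `h(k) = k - 2 - ((k-2)/n)·n`): `Δg(k) ≥ c ↔ ΔgG_{v_{f(k)}}(h(k)) ≥ cG_{v_{f(k)}}`
and `Δg(k) ≤ c ↔ ΔgG_{v_{f(k)}}(h(k)) ≤ cG_{v_{f(k)}}`.  Then the heterogeneous game on `G₀`
has a PSNE iff the fully homogeneous game `(g, c)` on `H` has a PSNE. -/
theorem hetero_iff_homo (n : ℕ) (hn : 1 ≤ n) (G₀ : SimpleGraph (Fin n))
    (gG : Fin n → ℕ → ℝ) (cG : Fin n → ℝ)
    (hMonoG : ∀ v, Monotone (gG v)) (hcG : ∀ v, 0 < cG v)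
    (g : ℕ → ℝ) (c : ℝ) (hMono : Monotone g) (hc : 0 < c)
    (h0 : c < g 1 - g 0) (h1 : c < g 2 - g 1)
    (hg : ∀ (k : ℕ) (i : Fin n), 2 ≤ k → k ≤ n ^ 2 + 1 → (i : ℕ) = (k - 2) / n →
      ((c ≤ g (k + 1) - g k ↔
          cG i ≤ gG i (k - 2 - (k - 2) / n * n + 1) - gG i (k - 2 - (k - 2) / n * n)) ∧
       (g (k + 1) - g k ≤ c ↔
          gG i (k - 2 - (k - 2) / n * n + 1) - gG i (k - 2 - (k - 2) / n * n) ≤ cG i))) :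
    (∃ x : Fin n → Bool, IsPSNE G₀ gG cG x) ↔
      ∃ y : HomV n → Bool, IsPSNE (homGraph G₀) (fun _ => g) (fun _ => c) y := by
  have key : ∀ y : HomV n → Bool, (∀ p, y (Sum.inr p) = true) → ∀ i : Fin n,
      (c ≤ g (nOnes (homGraph G₀) y (Sum.inl i) + 1) - g (nOnes (homGraph G₀) y (Sum.inl i)) ↔
        cG i ≤ gG i (nOnes G₀ (fun j => y (Sum.inl j)) i + 1)
          - gG i (nOnes G₀ (fun j => y (Sum.inl j)) i)) ∧
      (g (nOnes (homGraph G₀) y (Sum.inl i) + 1) - g (nOnes (homGraph G₀) y (Sum.inl i)) ≤ c ↔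
        gG i (nOnes G₀ (fun j => y (Sum.inl j)) i + 1)
          - gG i (nOnes G₀ (fun j => y (Sum.inl j)) i) ≤ cG i) := by
    intro y hy i
    rw [nOnes_main G₀ y hy i]
    have hlt := nOnes_lt G₀ (fun j => y (Sum.inl j)) i
    generalize nOnes G₀ (fun j => y (Sum.inl j)) i = m at hlt ⊢
    have e1 : 2 + (i : ℕ) * n + m - 2 = m + n * i := by
      rw [mul_comm]; omega
    have e2 : (m + n * (i : ℕ)) / n = i := by
      rw [Nat.add_mul_div_left _ _ (by omega), Nat.div_eq_of_lt hlt, zero_add]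
    have hle : ((i : ℕ) + 1) * n ≤ n * n := Nat.mul_le_mul_right n i.2
    have := hg (2 + (i : ℕ) * n + m) i (by omega) (by nlinarith) (by rw [e1, e2])
    rw [e1, e2, mul_comm n, Nat.add_sub_cancel] at this
    exact this
  have pend : ∀ (y : HomV n → Bool) p,
      c < g (nOnes (homGraph G₀) y (Sum.inr p) + 1) - g (nOnes (homGraph G₀) y (Sum.inr p)) := by
    intro y p
    have := nOnes_pendant_le G₀ y p
    generalize nOnes (homGraph G₀) y (Sum.inr p) = m at this ⊢
    interval_cases m
    · exact h0
    · exact h1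
  constructor
  · rintro ⟨x, hx⟩
    refine ⟨Sum.elim x (fun _ => true), ?_⟩
    rintro (i | p)
    · obtain ⟨k1, k2⟩ := key (Sum.elim x (fun _ => true)) (fun _ => rfl) i
      exact ⟨fun h => k1.2 ((hx i).1 h), fun h => k2.2 ((hx i).2 h)⟩
    · exact ⟨fun _ => (pend _ p).le, fun h => by simp at h⟩
  · rintro ⟨y, hy⟩
    have hp : ∀ p, y (Sum.inr p) = true := by
      intro p
      by_contra h
      have := (hy (Sum.inr p)).2 (by simpa using h)
      exact absurd (pend y p) (not_lt.mpr this)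
    refine ⟨fun j => y (Sum.inl j), fun i => ?_⟩
    obtain ⟨k1, k2⟩ := key y hp i
    exact ⟨fun h => k1.1 ((hy (Sum.inl i)).1 h), fun h => k2.1 ((hy (Sum.inl i)).2 h)⟩
end

section
/- For every integer k ≥ 0, the BNPG game on G with c_v = 1 and g_v(ℓ) = min(ℓ, d(v)) + 1 for every vertex v has a pure strategy Nash equilibrium in which at most k players play 0 if and only if G has a dominating set of size at most k. -/
theorem nOnes_lt_iff {V : Type*} [Fintype V] (G : SimpleGraph V) (x : V → Bool) (v : V) :
    nOnes G x v < Nat.card (G.neighborSet v) ↔ ∃ w, x w = false ∧ G.Adj v w := by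
  have h1 : nOnes G x v = ({w : V | G.Adj v w ∧ x w = true}).ncard := rfl
  have h2 : Nat.card (G.neighborSet v) = (G.neighborSet v).ncard := rfl
  rw [h1, h2]
  constructor
  · intro h
    by_contra hc
    push Not at hc
    refine absurd h (not_lt.mpr (Set.ncard_le_ncard ?_ (Set.toFinite _)))
    intro w hw
    refine ⟨hw, ?_⟩
    by_contra hx
    exact hc w (by simpa using hx) hw
  · rintro ⟨w, hx, hw⟩
    refine Set.ncard_lt_ncard ⟨fun u hu => hu.1, fun hs => ?_⟩ (Set.toFinite _)
    have := (hs hw).2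
    simp [hx] at this

theorem isPSNE_iff {V : Type*} [Fintype V] (G : SimpleGraph V) (x : V → Bool) :
    IsPSNE G (fun v ℓ => ((min ℓ (Nat.card (G.neighborSet v)) + 1 : ℕ) : ℝ)) (fun _ => 1) x ↔
      ∀ v, x v = true → ∃ w, x w = false ∧ G.Adj v w := by
  unfold IsPSNE
  refine forall_congr' fun v => ?_
  rw [← nOnes_lt_iff]
  beta_reduce
  generalize nOnes G x v = n
  generalize Nat.card (G.neighborSet v) = d
  rw [le_sub_iff_add_le, sub_le_iff_le_add]
  norm_cast
  constructor
  · rintro ⟨h, -⟩ hx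
    have := h hx
    omega
  · intro h
    refine ⟨fun hx => ?_, fun _ => by omega⟩
    have := h hx
    omega

/-- For every `k ≥ 0`, the BNPG game on `G` with `c_v = 1` and
`g_v(ℓ) = min(ℓ, d(v)) + 1` (where `d(v)` is the degree of `v`) has a PSNE in which at most `k`
players play `0` iff `G` has a dominating set of size at most `k`. -/
theorem psne_few_zeros_iff_dominating {V : Type*} [Fintype V] (G : SimpleGraph V) (k : ℕ) :
    (∃ x : V → Bool,
        IsPSNE G (fun v ℓ => ((min ℓ (Nat.card (G.neighborSet v)) + 1 : ℕ) : ℝ))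
          (fun _ => 1) x ∧
        Nat.card {v : V // x v = false} ≤ k) ↔
      ∃ W : Set V, (∀ v ∉ W, ∃ w ∈ W, G.Adj v w) ∧ W.ncard ≤ k := by
  classical
  simp only [isPSNE_iff]
  constructor
  · rintro ⟨x, hx, hk⟩
    refine ⟨{v | x v = false}, fun v hv => ?_, hk⟩
    exact hx v (by simpa using hv)
  · rintro ⟨W, hW, hk⟩
    refine ⟨fun v => decide (v ∉ W), fun v hv => ?_, ?_⟩
    · obtain ⟨w, hw, ha⟩ := hW v (by simpa using hv)
      exact ⟨w, by simpa using hw, ha⟩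
    · have : {v : V | decide (v ∉ W) = false} = W := by ext; simp
      change ({v : V | decide (v ∉ W) = false}).ncard ≤ k
      rwa [this]
end

section
/- For every integer k ≥ 0, the fully homogeneous BNPG game on G with c = 1, g(0) = 1 and g(ℓ) = ℓ + 2 for ℓ ≥ 1 has a pure strategy Nash equilibrium in which at most k players play 1 if and only if G has a dominating set of size at most k. -/
theorem isPSNE_iff_dominating {V : Type*} [Fintype V] (G : SimpleGraph V) (x : V → Bool) :
    IsPSNE G (fun _ ℓ => if ℓ = 0 then (1 : ℝ) else (ℓ : ℝ) + 2) (fun _ => 1) x ↔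
      ∀ v, x v = false → ∃ w, G.Adj v w ∧ x w = true := by
  unfold IsPSNE
  refine forall_congr' fun v => ?_
  have hn : nOnes G x v = 0 ↔ ¬ ∃ w, G.Adj v w ∧ x w = true := by
    unfold nOnes
    rw [Finite.card_eq_zero_iff, isEmpty_subtype, not_exists]
  by_cases h0 : nOnes G x v = 0
  · have h1 := hn.1 h0
    simp only [h0, h1]
    norm_num
  · have h1 : ∃ w, G.Adj v w ∧ x w = true := by
      by_contra h
      exact h0 (hn.2 h)
    simp only [h0, h1, if_false, Nat.succ_ne_zero]
    push_cast
    refine ⟨fun _ _ => trivial, fun _ => ⟨fun _ => by linarith, fun _ => by linarith⟩⟩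

/-- For every `k ≥ 0`, the fully homogeneous BNPG game on `G` with `c = 1`,
`g(0) = 1` and `g(ℓ) = ℓ + 2` for `ℓ ≥ 1` has a PSNE in which at most `k` players play `1` iff
`G` has a dominating set of size at most `k`. -/
theorem psne_few_ones_iff_dominating {V : Type*} [Fintype V] (G : SimpleGraph V) (k : ℕ) :
    (∃ x : V → Bool,
        IsPSNE G (fun _ ℓ => if ℓ = 0 then (1 : ℝ) else (ℓ : ℝ) + 2) (fun _ => 1) x ∧
        Nat.card {v : V // x v = true} ≤ k) ↔
      ∃ W : Set V, (∀ v ∉ W, ∃ w ∈ W, G.Adj v w) ∧ W.ncard ≤ k := by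
  classical
  constructor
  · rintro ⟨x, hx, hk⟩
    rw [isPSNE_iff_dominating] at hx
    refine ⟨{v | x v = true}, fun v hv => ?_, hk⟩
    obtain ⟨w, hw, hxw⟩ := hx v (by simpa using hv)
    exact ⟨w, hxw, hw⟩
  · rintro ⟨W, hW, hk⟩
    refine ⟨fun v => decide (v ∈ W), (isPSNE_iff_dominating G _).2 fun v hv => ?_, ?_⟩
    · obtain ⟨w, hw, hvw⟩ := hW v (by simpa using hv)
      exact ⟨w, hvw, by simpa using hw⟩
    · simp only [decide_eq_true_eq]
      exact hk
end

section
/- Let (G = (V, E), (g_v), (c_v)) be a BNPG game, let S ⊆ V, and let x : V → {0,1} be a pure strategy Nash equilibrium. For each v ∈ S let m_v be the number of neighbors w of v outside S with x_w = 1, and define g′_v(k) = g_v(k + m_v). Then the restriction of x to S is a PSNE of the BNPG game on the induced subgraph G[S] with functions (g′_v)_{v ∈ S} and constants (c_v)_{v ∈ S}. -/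
/-- Let `(G, g, c)` be a BNPG game, `S ⊆ V`, and `x` a PSNE.  For each
`v ∈ S` let `m_v` be the number of neighbors `w ∉ S` of `v` with `x_w = 1`, and set
`g′_v(k) = g_v(k + m_v)`.  Then the restriction of `x` to `S` is a PSNE of the BNPG game on the
induced subgraph `G[S]` with functions `(g′_v)_{v ∈ S}` and constants `(c_v)_{v ∈ S}`. -/
theorem psne_restrict_induced {V : Type*} [Fintype V] (G : SimpleGraph V)
    (g : V → ℕ → ℝ) (c : V → ℝ)
    (hMono : ∀ v, Monotone (g v)) (hc : ∀ v, 0 < c v)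
    (S : Set V) (x : V → Bool) (hx : IsPSNE G g c x)
    (m : V → ℕ) (hm : ∀ v : V, m v = Nat.card {w : V // w ∉ S ∧ G.Adj v w ∧ x w = true}) :
    IsPSNE (G.induce S) (fun v k => g v.1 (k + m v.1)) (fun v => c v.1)
      (fun v => x v.1) := by
  classical
  have key : ∀ v : S, nOnes G x v.1 =
      nOnes (G.induce S) (fun v => x v.1) v + m v.1 := by
    intro v
    rw [hm]
    unfold nOnes
    rw [← Nat.card_sum]
    apply Nat.card_congr
    exact
      { toFun := fun w => if h : w.1 ∈ S then Sum.inl ⟨⟨w.1, h⟩, w.2⟩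
          else Sum.inr ⟨w.1, h, w.2⟩
        invFun := Sum.elim (fun w => ⟨w.1.1, w.2⟩) (fun w => ⟨w.1, w.2.2⟩)
        left_inv := by
          intro w
          by_cases h : w.1 ∈ S <;> simp [h]
        right_inv := by
          rintro (⟨⟨w, h⟩, hw⟩ | ⟨w, h, hw⟩) <;> simp [h] }
  intro v
  have h := hx v.1
  rw [key v] at h
  simpa only [add_right_comm] using h
end

section
/- Let (G = (V, E), (g_v), (c_v)) be a BNPG game and let T ⊆ V be a set of vertices each of which is adjacent in G to every other vertex of G. Let y : V ∖ T → {0,1}, let p = |{u ∈ V ∖ T : y_u = 1}|, and define g′_v(k) = g_v(k + p) for v ∈ T. Suppose x, x′ : T → {0,1} have the same number of players playing 1, the combined profile (y, x) is a PSNE of the game on G, and x′ is a PSNE of the game on the induced subgraph G[T] (which is a complete graph) with functions (g′_v)_{v ∈ T} and constants (c_v)_{v ∈ T}. Then the combined profile (y, x′) is also a PSNE of the game on G. -/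
theorem card_split_aux {V : Type*} [Fintype V] (T : Set V) (P : V → Prop) :
    Nat.card {w : V // P w} =
      Nat.card {w : V // w ∈ T ∧ P w} + Nat.card {w : V // w ∉ T ∧ P w} := by
  classical
  simp only [Nat.card_eq_fintype_card, Fintype.card_subtype]
  rw [← Finset.card_filter_add_card_filter_not (s := Finset.univ.filter P) (fun w => w ∈ T)]
  simp only [Finset.filter_filter, and_comm]

/-- Let `(G, g, c)` be a BNPG game and `T ⊆ V` a set of vertices each of
which is adjacent to every other vertex of `G`.  Let `z` and `z'` be strategy profiles agreeing
outside `T` (the common outside part is the profile `y`), let `p` be the number of players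
outside `T` playing `1`, and set `g′_v(k) = g_v(k + p)` for `v ∈ T`.  If `z` and `z'` have the
same number of players of `T` playing `1`, `z` is a PSNE of the game on `G`, and the
restriction of `z'` to `T` is a PSNE of the game on the induced (complete) subgraph `G[T]` with
functions `g′` and constants `c`, then `z'` is also a PSNE of the game on `G`. -/
theorem psne_swap_on_clique {V : Type*} [Fintype V] (G : SimpleGraph V)
    (g : V → ℕ → ℝ) (c : V → ℝ)
    (hMono : ∀ v, Monotone (g v)) (hc : ∀ v, 0 < c v)
    (T : Set V) (hT : ∀ v ∈ T, ∀ w : V, w ≠ v → G.Adj v w)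
    (z z' : V → Bool) (hagree : ∀ v ∉ T, z v = z' v)
    (p : ℕ) (hp : p = Nat.card {v : V // v ∉ T ∧ z v = true})
    (hcount : Nat.card {v : V // v ∈ T ∧ z v = true} =
      Nat.card {v : V // v ∈ T ∧ z' v = true})
    (hz : IsPSNE G g c z)
    (hz' : IsPSNE (G.induce T) (fun v k => g v.1 (k + p)) (fun v => c v.1)
      (fun v => z' v.1)) :
    IsPSNE G g c z' := by
  have key : ∀ v, v ∉ T → nOnes G z' v = nOnes G z v := by
    intro v hv
    have hadj : ∀ w ∈ T, G.Adj v w := fun w hw =>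
      (hT w hw v (fun h => hv (h ▸ hw))).symm
    unfold nOnes
    rw [card_split_aux T, card_split_aux T (fun w => G.Adj v w ∧ z w = true)]
    congr 1
    · have e : ∀ y : V → Bool, Nat.card {w : V // w ∈ T ∧ G.Adj v w ∧ y w = true} =
          Nat.card {w : V // w ∈ T ∧ y w = true} := fun y =>
        Nat.card_congr (Equiv.subtypeEquivRight fun w =>
          ⟨fun h => ⟨h.1, h.2.2⟩, fun h => ⟨h.1, hadj w h.1, h.2⟩⟩)
      rw [e, e, hcount]
    · refine Nat.card_congr (Equiv.subtypeEquivRight fun w => ?_)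
      refine and_congr_right fun hw => ?_
      rw [hagree w hw]
  have key2 : ∀ v (hv : v ∈ T), nOnes G z' v =
      nOnes (G.induce T) (fun v => z' v.1) ⟨v, hv⟩ + p := by
    intro v hv
    unfold nOnes
    rw [card_split_aux T, hp]
    congr 1
    · refine Nat.card_congr ⟨fun w => ⟨⟨w.1, w.2.1⟩, w.2.2⟩,
        fun w => ⟨w.1.1, w.1.2, w.2⟩, fun _ => rfl, fun _ => rfl⟩
    · refine Nat.card_congr (Equiv.subtypeEquivRight fun w => ?_)
      refine and_congr_right fun hw => ?_
      rw [hagree w hw]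
      exact ⟨fun h => h.2, fun h => ⟨hT v hv w (fun e => hw (e ▸ hv)), h⟩⟩
  intro v
  by_cases hv : v ∈ T
  · have h := hz' ⟨v, hv⟩
    rw [key2 v hv]
    simpa only [Nat.add_right_comm _ 1 p] using h
  · have h := hz v
    rw [key v hv, ← hagree v hv]
    exact h
end

section
/- Every fully homogeneous BNPG game on a path (vertices v_1,…,v_n with edges {v_i, v_{i+1}} for 1 ≤ i ≤ n−1, n ≥ 1) has a pure strategy Nash equilibrium. -/
lemma nOnes_path (n : ℕ) (y : ℕ → Bool) (v : Fin n) :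
    nOnes (SimpleGraph.pathGraph n) (fun i => y i.val) v =
      (if v.val + 1 < n ∧ y (v.val + 1) = true then 1 else 0) +
      (if 0 < v.val ∧ y (v.val - 1) = true then 1 else 0) := by
  classical
  unfold nOnes
  rw [Nat.card_eq_fintype_card, Fintype.card_subtype, Finset.card_filter]
  have h1 : ∀ w : Fin n, (if (SimpleGraph.pathGraph n).Adj v w ∧ y w.val = true then 1 else 0)
      = (fun i : ℕ => (if i = v.val + 1 then (if y (v.val + 1) = true then 1 else 0) else 0) +
        (if i = v.val - 1 then (if 0 < v.val ∧ y (v.val - 1) = true then 1 else 0) else 0))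
          w.val := by
    intro w
    simp only [SimpleGraph.pathGraph_adj]
    rcases v with ⟨v, hv⟩
    rcases w with ⟨w, hw⟩
    simp only
    by_cases a : w = v + 1
    · subst a
      simp
      omega
    · by_cases b : w = v - 1
      · subst b
        by_cases h0 : 0 < v
        · have e : v - 1 + 1 = v := by omega
          simp [a, e, h0]
        · have : v = 0 := by omega
          subst this
          simp
      · have : ¬ (v + 1 = w ∨ w + 1 = v) := by omega
        simp [a, b, this]
  rw [Finset.sum_congr rfl (fun w _ => h1 w), Fin.sum_univ_eq_sum_range
    (fun i : ℕ => (if i = v.val + 1 then (if y (v.val + 1) = true then 1 else 0) else 0) +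
        (if i = v.val - 1 then (if 0 < v.val ∧ y (v.val - 1) = true then 1 else 0) else 0)) n,
    Finset.sum_add_distrib, Finset.sum_ite_eq', Finset.sum_ite_eq']
  have := v.isLt
  have h2 : v.val - 1 < n := by omega
  simp only [Finset.mem_range, h2, if_true]
  by_cases h : v.val + 1 < n <;> simp [h]

/-- Reduction to a combinatorial condition on a 0/1 sequence. -/
lemma psne_of_seq (n : ℕ) (g : ℕ → ℝ) (c : ℝ) (y : ℕ → Bool)
    (h : ∀ v < n, ∀ k, k = (if v + 1 < n ∧ y (v + 1) = true then 1 else 0) +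
      (if 0 < v ∧ y (v - 1) = true then 1 else 0) →
      (y v = true → c ≤ g (k + 1) - g k) ∧ (y v = false → g (k + 1) - g k ≤ c)) :
    ∃ x : Fin n → Bool, IsPSNE (SimpleGraph.pathGraph n) (fun _ => g) (fun _ => c) x :=
  ⟨fun i => y i.val, fun v => h v.val v.isLt _ (nOnes_path n y v)⟩

/-- Every fully homogeneous BNPG game on a path with `n ≥ 1` vertices has a
pure strategy Nash equilibrium. -/
theorem path_psne (n : ℕ) (hn : 1 ≤ n) (g : ℕ → ℝ) (c : ℝ)
    (hMono : Monotone g) (hc : 0 < c) :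
    ∃ x : Fin n → Bool, IsPSNE (SimpleGraph.pathGraph n) (fun _ => g) (fun _ => c) x := by
  rcases le_total (g (0 + 1) - g 0) c with h0 | h0
  · apply psne_of_seq n g c (fun _ => false)
    intro v hv k hk
    simp at hk
    subst hk
    simpa using h0
  rcases le_total (g (1 + 1) - g 1) c with h1 | h1 <;>
  rcases le_total (g (2 + 1) - g 2) c with h2 | h2
  · apply psne_of_seq n g c (fun i => decide (i % 2 = 0))
    intro v hv k hk
    simp only [decide_eq_true_eq, decide_eq_false_iff_not] at hk ⊢
    constructor
    · intro hy
      have : k = 0 := by split_ifs at hk <;> omega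
      subst this; exact h0
    · intro hy
      have : k = 1 ∨ k = 2 := by split_ifs at hk <;> omega
      rcases this with rfl | rfl <;> assumption
  · apply psne_of_seq n g c (fun i => decide (i % 3 = if n % 3 = 0 then 1 else 0))
    intro v hv k hk
    simp only [decide_eq_true_eq, decide_eq_false_iff_not] at hk ⊢
    constructor
    · intro hy
      have : k = 0 := by split_ifs at hk hy <;> omega
      subst this; exact h0
    · intro hy
      have : k = 1 := by split_ifs at hk hy <;> omega
      subst this; exact h1
  · apply psne_of_seq n g c (fun i => decide (i % 3 ≠ if n % 3 = 2 then 2 else 1))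
    intro v hv k hk
    simp only [decide_eq_true_eq, decide_eq_false_iff_not] at hk ⊢
    constructor
    · intro hy
      have : k = 0 ∨ k = 1 := by split_ifs at hk hy <;> omega
      rcases this with rfl | rfl <;> assumption
    · intro hy
      have : k = 2 := by split_ifs at hk hy <;> omega
      subst this; exact h2
  · apply psne_of_seq n g c (fun _ => true)
    intro v hv k hk
    have : k = 0 ∨ k = 1 ∨ k = 2 := by split_ifs at hk <;> omega
    rcases this with rfl | rfl | rfl <;> simpa
end

section
/- For every fully homogeneous BNPG game on the complete graph K_n (n ≥ 1) there exists an integer k with 0 ≤ k ≤ n such that every strategy profile in which exactly k players play 1 is a pure strategy Nash equilibrium; in particular, every fully homogeneous BNPG game on a complete graph has a PSNE. -/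
/-- A stable number of contributors exists. -/
theorem exists_stable_count (d : ℕ → ℝ) (c : ℝ) (m : ℕ) :
    ∃ k ≤ m, (∀ j, k = j + 1 → c ≤ d j) ∧ (k < m → d k ≤ c) := by
  induction m with
  | zero => exact ⟨0, le_rfl, by simp, by simp⟩
  | succ m ih =>
    obtain ⟨k, hk, h1, h2⟩ := ih
    rcases hk.lt_or_eq with h | rfl
    · exact ⟨k, by omega, h1, fun _ => h2 h⟩
    · rcases le_total (d k) c with h | h
      · exact ⟨k, by omega, h1, fun _ => h⟩
      · refine ⟨k + 1, le_rfl, ?_, by simp⟩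
        intro j hj
        obtain rfl : k = j := by omega
        exact h

/-- For every fully homogeneous BNPG game on the complete graph `K_n`
(`n ≥ 1`) there exists `0 ≤ k ≤ n` such that every strategy profile in which exactly `k`
players play `1` is a PSNE; in particular the game has a PSNE. -/
theorem complete_graph_psne (n : ℕ) (hn : 1 ≤ n) (g : ℕ → ℝ) (c : ℝ)
    (hMono : Monotone g) (hc : 0 < c) :
    ∃ k : ℕ, k ≤ n ∧
      (∀ x : Fin n → Bool, Nat.card {v : Fin n // x v = true} = k →
        IsPSNE (⊤ : SimpleGraph (Fin n)) (fun _ => g) (fun _ => c) x) ∧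
      ∃ x : Fin n → Bool, IsPSNE (⊤ : SimpleGraph (Fin n)) (fun _ => g) (fun _ => c) x := by
  classical
  obtain ⟨k, hk, h1, h2⟩ := exists_stable_count (fun i => g (i + 1) - g i) c n
  have key : ∀ x : Fin n → Bool, Nat.card {v : Fin n // x v = true} = k →
      IsPSNE (⊤ : SimpleGraph (Fin n)) (fun _ => g) (fun _ => c) x := by
    intro x hx v
    rw [Nat.card_eq_fintype_card, Fintype.card_subtype] at hx
    have hN : nOnes (⊤ : SimpleGraph (Fin n)) x v
        = ((Finset.univ.filter fun w => x w = true).erase v).card := by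
      unfold nOnes
      rw [Nat.card_eq_fintype_card, Fintype.card_subtype]
      congr 1
      ext w
      simp [ne_comm (a := v) (b := w), eq_comm (a := v) (b := w)]
    constructor
    · intro hv
      have hm : v ∈ Finset.univ.filter fun w => x w = true := by simp [hv]
      have hc1 := Finset.card_erase_add_one hm
      rw [← hN, hx] at hc1
      exact h1 _ hc1.symm
    · intro hv
      have hm : v ∉ Finset.univ.filter fun w => x w = true := by simp [hv]
      rw [Finset.erase_eq_of_notMem hm, hx] at hN
      rw [hN]
      apply h2
      have := Finset.card_lt_univ_of_notMem hm
      rw [hx, Fintype.card_fin] at this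
      exact this
  refine ⟨k, hk, key, ?_⟩
  obtain ⟨s, -, hs⟩ := Finset.exists_subset_card_eq
    (s := (Finset.univ : Finset (Fin n))) (n := k) (by simpa using hk)
  refine ⟨fun v => decide (v ∈ s), key _ ?_⟩
  simp [hs]
end

section
/- Every fully homogeneous BNPG game on a cycle C_n (vertices v_1,…,v_n with edges {v_i, v_{i+1}} for 1 ≤ i ≤ n−1 and the edge {v_n, v_1}, n ≥ 3) has a pure strategy Nash equilibrium. -/
/-- The two neighbors of a vertex of the cycle, by their indices. -/
lemma cycle_nbrs (n : ℕ) (hn : 3 ≤ n) (v : Fin n) :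
    ∃ p q : Fin n, p ≠ q ∧ (∀ w, (SimpleGraph.cycleGraph n).Adj v w ↔ w = p ∨ w = q) ∧
      (q : ℕ) = (if (v : ℕ) + 1 = n then 0 else (v : ℕ) + 1) ∧
      (p : ℕ) = (if (v : ℕ) = 0 then n - 1 else (v : ℕ) - 1) := by
  have hv := v.isLt
  refine ⟨⟨if (v : ℕ) = 0 then n - 1 else (v : ℕ) - 1, by split_ifs <;> omega⟩,
    ⟨if (v : ℕ) + 1 = n then 0 else (v : ℕ) + 1, by split_ifs <;> omega⟩, ?_, ?_, rfl, rfl⟩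
  · intro h
    have := congrArg Fin.val h
    simp only at this
    split_ifs at this <;> omega
  · intro w
    have hw := w.isLt
    rw [SimpleGraph.cycleGraph_adj', Fin.ext_iff, Fin.ext_iff, Fin.sub_def, Fin.sub_def]
    simp only
    have key : ∀ a b : ℕ, a < n → b < n → (n - b + a) % n = if b ≤ a then a - b else n - b + a := by
      intro a b ha hb
      split_ifs with h
      · rw [show n - b + a = (a - b) + n by omega, Nat.add_mod_right, Nat.mod_eq_of_lt (by omega)]
      · exact Nat.mod_eq_of_lt (by omega)
    rw [key _ _ hv hw, key _ _ hw hv]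
    split_ifs <;> omega

lemma nOnes_eq {V : Type*} (G : SimpleGraph V) (x : V → Bool) (v p q : V) (hpq : p ≠ q)
    (h : ∀ w, G.Adj v w ↔ w = p ∨ w = q) :
    nOnes G x v = (if x p = true then 1 else 0) + (if x q = true then 1 else 0) := by
  classical
  have : nOnes G x v = (({p, q} : Finset V).filter (fun w => x w = true)).card := by
    unfold nOnes
    rw [← Nat.card_eq_finsetCard]
    exact Nat.card_congr (Equiv.subtypeEquivRight (fun w => by simp [h]))
  rw [this, Finset.card_filter, Finset.sum_pair hpq]

/-- Every fully homogeneous BNPG game on a cycle with `n ≥ 3` vertices has a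
pure strategy Nash equilibrium. -/
theorem cycle_psne (n : ℕ) (hn : 3 ≤ n) (g : ℕ → ℝ) (c : ℝ)
    (hMono : Monotone g) (hc : 0 < c) :
    ∃ x : Fin n → Bool, IsPSNE (SimpleGraph.cycleGraph n) (fun _ => g) (fun _ => c) x := by
  by_cases h0 : g (0 + 1) - g 0 ≤ c
  · refine ⟨fun _ => false, fun v => ?_⟩
    obtain ⟨p, q, hpq, hadj, -, -⟩ := cycle_nbrs n hn v
    rw [nOnes_eq _ _ v p q hpq hadj]
    simpa using h0
  by_cases h2 : c ≤ g (2 + 1) - g 2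
  · refine ⟨fun _ => true, fun v => ?_⟩
    obtain ⟨p, q, hpq, hadj, -, -⟩ := cycle_nbrs n hn v
    rw [nOnes_eq _ _ v p q hpq hadj]
    simpa using h2
  push Not at h0 h2
  by_cases h1 : g (1 + 1) - g 1 ≤ c
  · refine ⟨fun i => decide ((i : ℕ) % 2 = 0 ∧ (i : ℕ) + 1 ≠ n), fun v => ?_⟩
    obtain ⟨p, q, hpq, hadj, hq, hp⟩ := cycle_nbrs n hn v
    have hv := v.isLt
    rw [nOnes_eq _ _ v p q hpq hadj]
    simp only [decide_eq_true_eq, decide_eq_false_iff_not]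
    constructor
    · intro hx
      rw [if_neg (by split_ifs at hp <;> omega), if_neg (by split_ifs at hq <;> omega)]
      exact h0.le
    · intro hx
      by_cases a : (p : ℕ) % 2 = 0 ∧ (p : ℕ) + 1 ≠ n <;>
        by_cases b : (q : ℕ) % 2 = 0 ∧ (q : ℕ) + 1 ≠ n
      · rw [if_pos a, if_pos b]; exact h2.le
      · rw [if_pos a, if_neg b]; exact h1
      · rw [if_neg a, if_pos b]; exact h1
      · exfalso; split_ifs at hp hq <;> omega
  · push Not at h1
    refine ⟨fun i => decide (¬ ((i : ℕ) % 2 = 0 ∧ (i : ℕ) + 1 ≠ n)), fun v => ?_⟩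
    obtain ⟨p, q, hpq, hadj, hq, hp⟩ := cycle_nbrs n hn v
    have hv := v.isLt
    rw [nOnes_eq _ _ v p q hpq hadj]
    simp only [decide_eq_true_eq, decide_eq_false_iff_not]
    constructor
    · intro hx
      by_cases a : ¬ ((p : ℕ) % 2 = 0 ∧ (p : ℕ) + 1 ≠ n) <;>
        by_cases b : ¬ ((q : ℕ) % 2 = 0 ∧ (q : ℕ) + 1 ≠ n)
      · exfalso; split_ifs at hp hq <;> omega
      · rw [if_pos a, if_neg b]; exact h1.le
      · rw [if_neg a, if_pos b]; exact h1.le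
      · rw [if_neg a, if_neg b]; exact h0.le
    · intro hx
      rw [if_pos (by split_ifs at hp <;> omega), if_pos (by split_ifs at hq <;> omega)]
      exact h2.le
end

section
/- Every fully homogeneous BNPG game on a complete bipartite graph K_{n_1,n_2} (parts of sizes n_1 ≥ 1 and n_2 ≥ 1, with every vertex of one part adjacent to every vertex of the other part and no other edges) has a pure strategy Nash equilibrium. -/
/-- Neighbors playing `1`, seen from the left part, when each part plays a constant. -/
lemma nOnes_inl (n m : ℕ) (p q : Bool) (i : Fin n) :
    nOnes (completeBipartiteGraph (Fin n) (Fin m)) (Sum.elim (fun _ => p) (fun _ => q))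
      (Sum.inl i) = if q then m else 0 := by
  classical
  unfold nOnes
  rw [Nat.card_eq_fintype_card, Fintype.card_subtype, Finset.card_filter, Fintype.sum_sum_type]
  cases q <;> simp

/-- Neighbors playing `1`, seen from the right part, when each part plays a constant. -/
lemma nOnes_inr (n m : ℕ) (p q : Bool) (i : Fin m) :
    nOnes (completeBipartiteGraph (Fin n) (Fin m)) (Sum.elim (fun _ => p) (fun _ => q))
      (Sum.inr i) = if p then n else 0 := by
  classical
  unfold nOnes
  rw [Nat.card_eq_fintype_card, Fintype.card_subtype, Finset.card_filter, Fintype.sum_sum_type]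
  cases p <;> simp

/-- Every fully homogeneous BNPG game on a complete bipartite graph
`K_{n₁,n₂}` with `n₁, n₂ ≥ 1` has a pure strategy Nash equilibrium. -/
theorem biclique_psne (n₁ n₂ : ℕ) (h₁ : 1 ≤ n₁) (h₂ : 1 ≤ n₂) (g : ℕ → ℝ) (c : ℝ)
    (hMono : Monotone g) (hc : 0 < c) :
    ∃ x : Fin n₁ ⊕ Fin n₂ → Bool,
      IsPSNE (completeBipartiteGraph (Fin n₁) (Fin n₂)) (fun _ => g) (fun _ => c) x := by
  have key : ∀ p q : Bool,
      ((p = true → c ≤ g ((if q then n₂ else 0) + 1) - g (if q then n₂ else 0)) ∧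
       (p = false → g ((if q then n₂ else 0) + 1) - g (if q then n₂ else 0) ≤ c)) →
      ((q = true → c ≤ g ((if p then n₁ else 0) + 1) - g (if p then n₁ else 0)) ∧
       (q = false → g ((if p then n₁ else 0) + 1) - g (if p then n₁ else 0) ≤ c)) →
      ∃ x : Fin n₁ ⊕ Fin n₂ → Bool,
        IsPSNE (completeBipartiteGraph (Fin n₁) (Fin n₂)) (fun _ => g) (fun _ => c) x := by
    intro p q hp hq
    refine ⟨Sum.elim (fun _ => p) (fun _ => q), ?_⟩
    rintro (i | i)
    · rw [nOnes_inl]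
      exact hp
    · rw [nOnes_inr]
      exact hq
  rcases le_total (g (0 + 1) - g 0) c with h0 | h0
  · exact key false false (by simpa using h0) (by simpa using h0)
  rcases le_total (g (n₁ + 1) - g n₁) c with ha | ha
  · exact key true false (by simpa using h0) (by simpa using ha)
  rcases le_total (g (n₂ + 1) - g n₂) c with hb | hb
  · exact key false true (by simpa using hb) (by simpa using h0)
  · exact key true true (by simpa using hb) (by simpa using ha)
end
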